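/- For n ≥ 1, the number of closed quarter-plane walks of length 3n with step set S = {(0,1),(1,0),(-1,-1)} equals the number of closed quarter-plane walks of length 3n with Kreweras' step set S' = {(-1,0),(0,-1),(1,1)}; both equal 2·27^{n-1}(4/3)_{n-1}(5/3)_{n-1} / ((5/2)_{n-1}(3)_{n-1}). -/

import Mathlib

open Finset

/-- Number of quarter-plane walks of length `m` from `(0,0)` to `e` with steps in `S`:
sequences of `m` steps, each in `S`, all partial sums having nonnegative coordinates,
with total sum `e`. -/
noncomputable def qpWalks (S : Set (ℤ × ℤ)) (m : ℕ) (e : ℤ × ℤ) : ℕ :=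
  Nat.card {f : Fin m → ℤ × ℤ //
    (∀ i, f i ∈ S) ∧
    (∀ k : ℕ,
      0 ≤ (∑ i ∈ Finset.univ.filter (fun i : Fin m => (i : ℕ) < k), f i).1 ∧
      0 ≤ (∑ i ∈ Finset.univ.filter (fun i : Fin m => (i : ℕ) < k), f i).2) ∧
    (∑ i, f i) = e}

/-!
The step set `{(0, 1), (1, 0), (-1, -1)}` is the negation of Kreweras' step set, and reversing a
closed walk while negating its steps keeps it in the quarter plane, so the two counts agree.

For Kreweras' steps, splitting off the last step of a walk shows that the generating function
`Q(x, y)` of quarter-plane walks, with `t` marking the length, satisfies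
`(x y - t (x + y + x² y²)) Q(x, y) = x y - A(x) - A(y)` with `A(x) = t x Q(x, 0)`. Conversely, any
power series `Q` satisfying such an equation for some `A` counts walks, because its coefficients
obey the recurrence for walks. It therefore suffices to exhibit an algebraic solution, and
Bousquet-Mélou's formula for `Q(x, 0)` provides one. Its constant term is `V (3 - V) / 2`, where
`V = 1 + 4 t³ V³`. As a function of `t³` it satisfies a second-order linear differential equation
which relates only consecutive coefficients, and this two-term recurrence gives the product formula.
-/

section Walks

/-- The sum of the first `k` terms of `f`: if `f` lists the steps of a walk, this is the position
after `k` steps. For `k > m` it is the sum of all terms. -/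
def prefixSum {M : Type*} [AddCommMonoid M] {m : ℕ} (f : Fin m → M) (k : ℕ) : M :=
  ∑ i ∈ univ.filter (fun i : Fin m => (i : ℕ) < k), f i

theorem prefixSum_of_le {M : Type*} [AddCommMonoid M] {m k : ℕ} (f : Fin m → M) (hk : m ≤ k) :
    prefixSum f k = ∑ i, f i := by
  rw [prefixSum, filter_true_of_mem fun i _ => i.2.trans_le hk]

theorem prefixSum_snoc {M : Type*} [AddCommMonoid M] {m k : ℕ} (f : Fin m → M) (s : M)
    (hk : k ≤ m) : prefixSum (Fin.snoc f s : Fin (m + 1) → M) k = prefixSum f k := by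
  simp [prefixSum, sum_filter, Fin.sum_univ_castSucc, hk.not_gt]

theorem prefixSum_rev {M : Type*} [AddCommGroup M] {m : ℕ} (f : Fin m → M) (k : ℕ) :
    prefixSum (fun i => f i.rev) k = ∑ i, f i - prefixSum f (m - k) := by
  have hrev : prefixSum (fun i => f i.rev) k =
      ∑ i ∈ univ.filter (fun i : Fin m => ¬(i : ℕ) < m - k), f i := by
    rw [prefixSum, sum_filter, sum_filter]
    refine Fintype.sum_equiv Fin.revPerm _ _ fun i => if_congr ?_ rfl rfl
    rw [Fin.revPerm_apply, Fin.val_rev]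
    omega
  rw [hrev, ← sum_filter_add_sum_filter_not univ (fun i : Fin m => (i : ℕ) < m - k) f,
    prefixSum, add_sub_cancel_left]

/-- The condition on step sequences in the definition of `qpWalks`: `f` lists the steps of a
quarter-plane walk from the origin to `e` with steps in `S`. -/
def IsQPWalk (S : Set (ℤ × ℤ)) (m : ℕ) (e : ℤ × ℤ) (f : Fin m → ℤ × ℤ) : Prop :=
  (∀ i, f i ∈ S) ∧ (∀ k, 0 ≤ prefixSum f k) ∧ ∑ i, f i = e

variable {S : Set (ℤ × ℤ)} {m : ℕ} {e : ℤ × ℤ}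

theorem qpWalks_eq_card_isQPWalk (S : Set (ℤ × ℤ)) (m : ℕ) (e : ℤ × ℤ) :
    qpWalks S m e = Nat.card {f // IsQPWalk S m e f} :=
  rfl

theorem IsQPWalk.nonneg {f : Fin m → ℤ × ℤ} (hf : IsQPWalk S m e f) : 0 ≤ e := by
  obtain ⟨-, hpos, rfl⟩ := hf
  exact prefixSum_of_le f le_rfl ▸ hpos m

theorem qpWalks_eq_zero_of_not_nonneg (S : Set (ℤ × ℤ)) (m : ℕ) (he : ¬0 ≤ e) :
    qpWalks S m e = 0 := by
  rw [qpWalks_eq_card_isQPWalk, Nat.card_eq_zero]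
  exact .inl ⟨fun f => he f.2.nonneg⟩

theorem qpWalks_zero (S : Set (ℤ × ℤ)) (e : ℤ × ℤ) :
    qpWalks S 0 e = if e = 0 then 1 else 0 := by
  have hwalk (f : Fin 0 → ℤ × ℤ) : IsQPWalk S 0 e f ↔ e = 0 := by
    simp [IsQPWalk, prefixSum, eq_comm]
  simp_rw [qpWalks_eq_card_isQPWalk, hwalk]
  split_ifs with he <;> simp [he]

theorem isQPWalk_snoc_iff {f : Fin m → ℤ × ℤ} {s : ℤ × ℤ} (he : 0 ≤ e) :
    IsQPWalk S (m + 1) e (Fin.snoc f s) ↔ s ∈ S ∧ IsQPWalk S m (e - s) f := by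
  have hsum : ∑ i, (Fin.snoc f s : Fin (m + 1) → ℤ × ℤ) i = ∑ i, f i + s := by
    simp [Fin.sum_univ_castSucc]
  simp only [IsQPWalk, Fin.forall_fin_succ', Fin.snoc_castSucc, Fin.snoc_last, hsum,
    eq_sub_iff_add_eq]
  constructor
  · rintro ⟨⟨hf, hs⟩, hpos, hend⟩
    refine ⟨hs, hf, fun k => ?_, hend⟩
    obtain hk | hk := le_total k m
    · exact prefixSum_snoc f s hk ▸ hpos k
    · rw [prefixSum_of_le f hk, ← prefixSum_of_le f le_rfl, ← prefixSum_snoc f s le_rfl]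
      exact hpos m
  · rintro ⟨hs, hf, hpos, hend⟩
    refine ⟨⟨hf, hs⟩, fun k => ?_, hend⟩
    obtain hk | hk := le_or_gt k m
    · exact (prefixSum_snoc f s hk).symm ▸ hpos k
    · rw [prefixSum_of_le _ (Nat.succ_le_of_lt hk), hsum, hend]
      exact he

theorem finite_isQPWalk (S : Finset (ℤ × ℤ)) (m : ℕ) (e : ℤ × ℤ) :
    Finite {f // IsQPWalk S m e f} :=
  (Set.Finite.pi' fun _ => S.finite_toSet).subset fun _ hf => hf.1

theorem qpWalks_succ (S : Finset (ℤ × ℤ)) (m : ℕ) (he : 0 ≤ e) :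
    qpWalks S (m + 1) e = ∑ s ∈ S, qpWalks S m (e - s) := by
  let append : (Σ s : S, {f // IsQPWalk S m (e - s) f}) → {f // IsQPWalk S (m + 1) e f} :=
    fun p => ⟨Fin.snoc p.2.1 p.1.1, (isQPWalk_snoc_iff he).2 ⟨p.1.2, p.2.2⟩⟩
  have hinj : Function.Injective append := by
    rintro ⟨⟨s, _⟩, ⟨f, _⟩⟩ ⟨⟨s', _⟩, ⟨f', _⟩⟩ h
    obtain ⟨hf, hs⟩ := Fin.snoc_injective2 (α := fun _ => ℤ × ℤ) (congrArg Subtype.val h)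
    subst hf hs
    rfl
  have hsurj : Function.Surjective append := by
    rintro ⟨f, hf⟩
    rw [← Fin.snoc_init_self f, isQPWalk_snoc_iff he] at hf
    exact ⟨⟨⟨_, hf.1⟩, ⟨_, hf.2⟩⟩, Subtype.ext (Fin.snoc_init_self f)⟩
  have (s : S) := finite_isQPWalk S m (e - s)
  simp_rw [qpWalks_eq_card_isQPWalk]
  rw [← Nat.card_congr (Equiv.ofBijective append ⟨hinj, hsurj⟩), Nat.card_sigma,
    sum_coe_sort S fun s => Nat.card {f // IsQPWalk S m (e - s) f}]

open scoped Pointwise in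
theorem IsQPWalk.neg_rev {f : Fin m → ℤ × ℤ} (hf : IsQPWalk S m 0 f) :
    IsQPWalk (-S) m 0 fun i => -f i.rev := by
  obtain ⟨hf, hpos, hend⟩ := hf
  refine ⟨fun i => Set.neg_mem_neg.2 (hf _), fun k => ?_, ?_⟩
  · have hneg : prefixSum (fun i => -f i.rev) k = prefixSum f (m - k) := by
      rw [prefixSum_rev fun i => -f i]
      simp [prefixSum, hend]
    exact hneg ▸ hpos (m - k)
  · rw [sum_neg_distrib, neg_eq_zero, ← hend]
    exact Equiv.sum_comp Fin.revPerm f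

open scoped Pointwise in
theorem qpWalks_neg_zero (S : Set (ℤ × ℤ)) (m : ℕ) : qpWalks (-S) m 0 = qpWalks S m 0 := by
  simp_rw [qpWalks_eq_card_isQPWalk]
  exact Nat.card_congr
    { toFun f := ⟨fun i => -f.1 i.rev, by simpa only [neg_neg] using f.2.neg_rev⟩
      invFun f := ⟨fun i => -f.1 i.rev, f.2.neg_rev⟩
      left_inv f := by ext1; funext i; simp
      right_inv f := by ext1; funext i; simp }

end Walks

section AlgebraicSeries

open PowerSeries

/-- The Euler operator `X · d/dX` on power series. -/
noncomputable def eulerDerivation (R : Type*) [CommRing R] : Derivation R R⟦X⟧ R⟦X⟧ :=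
  (X : R⟦X⟧) • derivative R

variable {R : Type*} [CommRing R]

theorem exists_eq_one_add_mul_pow_succ {I : Ideal R} [HenselianRing R I] {z : R} (hz : z ∈ I)
    (k : ℕ) : ∃ v : R, v = 1 + z * v ^ (k + 1) := by
  -- `v` is obtained as the inverse of a root: in terms of `u = 1 / v` the equation is monic.
  let f : Polynomial R := .X ^ (k + 1) + (.C z - .X ^ k)
  have hf : f.Monic := by
    refine Polynomial.monic_X_pow_add (lt_of_le_of_lt (b := (k : WithBot ℕ)) ?_ ?_)
    · compute_degree!
    · exact_mod_cast k.lt_succ_self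
  obtain ⟨u, hu, hu1⟩ := HenselianRing.is_henselian (I := I) f hf 1 (by simpa [f] using hz)
    (by simp [f, Polynomial.derivative_X_pow])
  obtain ⟨w, hw⟩ : IsUnit u := by
    have := Ideal.mem_jacobson_bot.1 (HenselianRing.jac hu1) 1
    simpa using this
  have huw : u * ↑w⁻¹ = 1 := by rw [← hw, w.mul_inv]
  refine ⟨↑w⁻¹, ?_⟩
  have hroot : u ^ (k + 1) + (z - u ^ k) = 0 := by simpa [f] using hu
  have huw' : u ^ k * (↑w⁻¹ : R) ^ k = 1 := by rw [← mul_pow, huw, one_pow]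
  linear_combination (-(↑w⁻¹ : R) ^ (k + 1)) * hroot + (u * ↑w⁻¹ - ↑w⁻¹) * huw' + huw

theorem coeff_eulerDerivation (f : R⟦X⟧) (n : ℕ) :
    coeff n (eulerDerivation R f) = n * coeff n f := by
  cases n <;> simp [eulerDerivation, coeff_succ_X_mul, coeff_derivative, mul_comm]

theorem eulerDerivation_X : eulerDerivation R X = X := by
  simp [eulerDerivation]

theorem eulerDerivation_C (r : R) : eulerDerivation R (C r) = 0 := by
  simp [eulerDerivation]

local notation "θ" => eulerDerivation R

variable {c : R} {v : R⟦X⟧}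

theorem eulerDerivation_cubic (hv : v = 1 + C c * X * v ^ 3) :
    (3 - 2 * v) * θ v = v * (v - 1) := by
  have h := congrArg θ hv
  simp only [map_add, Derivation.leibniz, Derivation.leibniz_pow, Derivation.map_one_eq_zero,
    eulerDerivation_X, eulerDerivation_C, smul_eq_mul, nsmul_eq_mul] at h
  push_cast at h
  linear_combination v * h - (v + 3 * θ v) * hv

theorem eulerDerivation_cubic_ode (hv : v = 1 + C c * X * v ^ 3) {F : R⟦X⟧} (hF : F = v * (3 - v)) :
    2 * (2 * θ (θ F) + 3 * θ F + F) - 3 * C c * X * (9 * θ (θ F) + 9 * θ F + 2 * F) = 4 := by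
  have hθv := eulerDerivation_cubic hv
  have hθF : θ F = v * (v - 1) := by
    have hθ3 : θ 3 = 0 := Derivation.map_natCast θ 3
    rw [hF, ← hθv]
    simp only [map_sub, Derivation.leibniz, smul_eq_mul, hθ3]
    ring
  have hθθF : θ (θ F) = (2 * v - 1) * θ v := by
    rw [hθF]
    simp only [map_sub, Derivation.leibniz, smul_eq_mul, Derivation.map_one_eq_zero]
    ring
  have hunit : IsUnit (v ^ 3 * (3 - 2 * v)) := by
    have hv1 : constantCoeff v = 1 := by rw [hv]; simp
    rw [isUnit_iff_constantCoeff]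
    norm_num [hv1, map_ofNat]
  -- The factor `3 - 2 * v` clears the denominator of `θ v`, and `v ^ 3` turns `C c * X` into
  -- `v - 1`.
  apply hunit.mul_left_cancel
  rw [hθθF, hθF, hF]
  linear_combination v ^ 3 * (2 * v - 1) * (4 - 27 * C c * X) * hθv +
    3 * v * (9 * (2 * v - 1) * (v - 1) + (3 - 2 * v) * (7 * v - 3)) * hv

theorem coeff_cubic_recurrence (hv : v = 1 + C c * X * v ^ 3) (n : ℕ) :
    2 * (n + 2) * (2 * n + 3) * coeff (n + 1) (v * (3 - v)) =
      3 * c * (3 * n + 1) * (3 * n + 2) * coeff n (v * (3 - v)) := by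
  generalize hF : v * (3 - v) = F
  have h := congrArg (coeff (n + 1)) (eulerDerivation_cubic_ode hv hF.symm)
  simp only [← map_ofNat (C (R := R)), mul_assoc, map_add, map_sub, coeff_C_mul,
    coeff_succ_X_mul, coeff_succ_C, coeff_eulerDerivation] at h
  push_cast at h
  linear_combination h

end AlgebraicSeries

section Kreweras

open PowerSeries

/-- Kreweras' step set. -/
def krewerasSteps : Finset (ℤ × ℤ) := {(-1, 0), (0, -1), (1, 1)}

open scoped Pointwise in
theorem neg_krewerasSteps :
    -(krewerasSteps : Set (ℤ × ℤ)) = {(0, 1), (1, 0), (-1, -1)} := by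
  simp [krewerasSteps, Set.insert_comm]

theorem qpWalks_kreweras_succ (n i j : ℕ) :
    qpWalks krewerasSteps (n + 1) (i, j) =
      qpWalks krewerasSteps n ((i + 1 : ℕ), j) + qpWalks krewerasSteps n (i, (j + 1 : ℕ)) +
        if 0 < i ∧ 0 < j then qpWalks krewerasSteps n ((i - 1 : ℕ), (j - 1 : ℕ)) else 0 := by
  rw [qpWalks_succ _ _ (Prod.mk_le_mk.2 ⟨i.cast_nonneg, j.cast_nonneg⟩)]
  have hdiag : qpWalks krewerasSteps n ((i : ℤ) - 1, (j : ℤ) - 1) =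
      if 0 < i ∧ 0 < j then qpWalks krewerasSteps n ((i - 1 : ℕ), (j - 1 : ℕ)) else 0 := by
    split_ifs with hij
    · rw [Nat.cast_pred hij.1, Nat.cast_pred hij.2]
    · refine qpWalks_eq_zero_of_not_nonneg _ _ fun h => hij ?_
      simp only [Prod.le_def, Prod.fst_zero, Prod.snd_zero] at h
      omega
  rw [← hdiag]
  conv_lhs => rw [krewerasSteps, sum_insert (by decide), sum_insert (by decide), sum_singleton]
  simp [krewerasSteps, add_assoc]

variable {R : Type*} [CommRing R]

variable (R) in
/-- The kernel `x * y - t * (x + y + x ^ 2 * y ^ 2)` of the functional equation for Kreweras walks.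
In `R⟦X⟧⟦X⟧⟦X⟧` the innermost variable is the length variable `t`, the middle one is `x` and the
outermost one is `y`. -/
noncomputable def krewerasKernel : R⟦X⟧⟦X⟧⟦X⟧ :=
  C X * X - C (C X) * (C X + X + C X ^ 2 * X ^ 2)

theorem coeff_krewerasKernel_mul (Q : R⟦X⟧⟦X⟧⟦X⟧) (i j : ℕ) :
    coeff (i + 1) (coeff (j + 1) (krewerasKernel R * Q)) = coeff i (coeff j Q) -
      X * (coeff (i + 1) (coeff j Q) + coeff i (coeff (j + 1) Q) +
        if 0 < i ∧ 0 < j then coeff (i - 1) (coeff (j - 1) Q) else 0) := by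
  have hexpand : krewerasKernel R * Q = C X * (X * Q) -
      C (C X) * (X * Q + C X * Q + C (X ^ 2) * (X ^ 2 * Q)) := by
    rw [krewerasKernel, map_pow]
    ring
  rw [hexpand]
  simp only [map_sub, map_add, coeff_C_mul, coeff_succ_X_mul, coeff_X_pow_mul']
  cases i <;> cases j <;> simp

theorem coeff_eq_qpWalks_of_krewerasKernel_mul_eq {Q : R⟦X⟧⟦X⟧⟦X⟧} {A B : R⟦X⟧⟦X⟧}
    (h : krewerasKernel R * Q = C X * X - C A - PowerSeries.map C B) (n i j : ℕ) :
    coeff n (coeff i (coeff j Q)) = qpWalks krewerasSteps n (i, j) := by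
  have hrec (i j : ℕ) : coeff i (coeff j Q) = (if i = 0 ∧ j = 0 then 1 else 0) +
      X * (coeff (i + 1) (coeff j Q) + coeff i (coeff (j + 1) Q) +
        if 0 < i ∧ 0 < j then coeff (i - 1) (coeff (j - 1) Q) else 0) := by
    have hij := congrArg (fun P => coeff (i + 1) (coeff (j + 1) P)) h
    simp only [coeff_krewerasKernel_mul, map_sub, coeff_C_mul, coeff_succ_C, coeff_map,
      sub_zero] at hij
    rw [sub_eq_iff_eq_add.1 hij]
    cases i <;> cases j <;> simp [coeff_X]
  induction n generalizing i j with
  | zero =>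
    rw [hrec, qpWalks_zero]
    simp [apply_ite (constantCoeff (R := R))]
  | succ n ih =>
    rw [hrec, qpWalks_kreweras_succ, map_add, coeff_succ_X_mul]
    simp [ih, apply_ite (coeff n), apply_ite (coeff (n + 1)), coeff_one]

-- Bousquet-Mélou's formula `t x Q(x, 0) = 1 / (2 t) - 1 / x - (1 / W - 1 / x) √(1 - x W ^ 2)`,
-- where `W = t (2 + W ^ 3)`, becomes `t x Q(x, 0) = T x a (1 - 2 T ^ 3 a)` after the substitutions
-- `W = 2 T` and `√(1 - 4 T ^ 2 x) = 1 - 2 T ^ 2 x a`. The first factor below is the kernel times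
-- `1 + 4 T ^ 3`, by `T = t (1 + 4 T ^ 3)`.
theorem kreweras_kernel_identity {x y T a b : R} (ha : a = 1 + T ^ 2 * x * a ^ 2)
    (hb : b = 1 + T ^ 2 * y * b ^ 2) :
    (x * y * (1 + 4 * T ^ 3) - T * (x + y + x ^ 2 * y ^ 2)) * (a * b * (1 - 2 * T ^ 3 * (a * b))) =
      (x * y - T * x * a * (1 - 2 * T ^ 3 * a) - T * y * b * (1 - 2 * T ^ 3 * b)) *
        (1 - T * x * y * (a * b) * (1 - T ^ 3 * (a * b))) := by
  grind

theorem krewerasKernel_mul_C_C {V T : R⟦X⟧} (hV : V = 1 + 4 * T ^ 3) (hT : T = X * V) :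
    krewerasKernel R * C (C V) = C X * X * (1 + 4 * C (C T) ^ 3) -
      C (C T) * (C X + X + C X ^ 2 * X ^ 2) := by
  have hCV : (C (C V) : R⟦X⟧⟦X⟧⟦X⟧) = 1 + 4 * C (C T) ^ 3 := by
    simpa [map_ofNat] using congrArg (fun f => (C (C f) : R⟦X⟧⟦X⟧⟦X⟧)) hV
  have hCT : (C (C T) : R⟦X⟧⟦X⟧⟦X⟧) = C (C X) * C (C V) := by
    rw [hT, map_mul, map_mul]
  rw [krewerasKernel]
  linear_combination C X * X * hCV + (C X + X + C X ^ 2 * X ^ 2) * hCT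

theorem exists_krewerasKernel_mul_eq {V T : R⟦X⟧} (hV : V = 1 + 4 * T ^ 3) (hT : T = X * V) :
    ∃ (Q : R⟦X⟧⟦X⟧⟦X⟧) (A : R⟦X⟧⟦X⟧), krewerasKernel R * Q = C X * X - C A - PowerSeries.map C A ∧
      constantCoeff (constantCoeff Q) = V * (1 - 2 * T ^ 3) := by
  obtain ⟨a, ha⟩ := exists_eq_one_add_mul_pow_succ (I := Ideal.span {X}) (z := C (T ^ 2) * X)
    (Ideal.mul_mem_left _ _ (Ideal.mem_span_singleton_self X)) 1
  have ha₀ : constantCoeff a = 1 := by rw [ha]; simp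
  let x : R⟦X⟧⟦X⟧⟦X⟧ := C X
  let y : R⟦X⟧⟦X⟧⟦X⟧ := X
  let τ : R⟦X⟧⟦X⟧⟦X⟧ := C (C T)
  let α : R⟦X⟧⟦X⟧⟦X⟧ := C a
  let β : R⟦X⟧⟦X⟧⟦X⟧ := PowerSeries.map C a
  have hα : α = 1 + τ ^ 2 * x * α ^ 2 := by
    simpa using congrArg (C (R := R⟦X⟧⟦X⟧)) ha
  have hβ : β = 1 + τ ^ 2 * y * β ^ 2 := by
    simpa using congrArg (PowerSeries.map (C (R := R⟦X⟧))) ha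
  let N := α * β * (1 - 2 * τ ^ 3 * (α * β))
  let D := 1 - τ * x * y * (α * β) * (1 - τ ^ 3 * (α * β))
  have hD₀ : constantCoeff D = 1 := by simp [D, y]
  obtain ⟨E, hDE⟩ := (isUnit_iff_constantCoeff.2 (hD₀ ▸ isUnit_one)).exists_right_inv
  refine ⟨C (C V) * N * E, C T * X * a * (1 - 2 * C T ^ 3 * a), ?_, ?_⟩
  · calc krewerasKernel R * (C (C V) * N * E)
      _ = krewerasKernel R * C (C V) * N * E := by ring
      _ = (x * y - τ * x * α * (1 - 2 * τ ^ 3 * α) - τ * y * β * (1 - 2 * τ ^ 3 * β)) *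
          (D * E) := by
        rw [krewerasKernel_mul_C_C hV hT, kreweras_kernel_identity hα hβ, mul_assoc]
      _ = C X * X - C (C T * X * a * (1 - 2 * C T ^ 3 * a)) -
          PowerSeries.map C (C T * X * a * (1 - 2 * C T ^ 3 * a)) := by
        rw [hDE, mul_one]
        simp [τ, α, β, x, y, map_ofNat]
  · have hE₀ : constantCoeff E = 1 := by simpa [hD₀] using congrArg constantCoeff hDE
    have hβ₀ : constantCoeff (constantCoeff β) = 1 := by
      rw [← coeff_zero_eq_constantCoeff_apply β, coeff_map, coeff_zero_eq_constantCoeff_apply, ha₀,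
        map_one, map_one]
    simp [N, α, τ, ha₀, hβ₀, hE₀, map_ofNat]

theorem two_mul_qpWalks_kreweras {V : R⟦X⟧} (hV : V = 1 + 4 * X ^ 3 * V ^ 3) (n : ℕ) :
    2 * (qpWalks krewerasSteps n 0 : R) = coeff n (V * (3 - V)) := by
  have hVT : V = 1 + 4 * (X * V) ^ 3 := by linear_combination hV
  obtain ⟨Q, A, hQ, hQ0⟩ := exists_krewerasKernel_mul_eq hVT rfl
  have hcoeff := coeff_eq_qpWalks_of_krewerasKernel_mul_eq hQ n 0 0
  simp only [coeff_zero_eq_constantCoeff_apply, hQ0, Nat.cast_zero] at hcoeff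
  rw [← Prod.mk_zero_zero, ← hcoeff, ← coeff_C_mul]
  congr 1
  rw [map_ofNat]
  linear_combination V * hV

theorem qpWalks_kreweras_recurrence (n : ℕ) :
    ((n : ℚ) + 2) * (2 * n + 3) * qpWalks krewerasSteps (3 * (n + 1)) 0 =
      6 * (3 * n + 1) * (3 * n + 2) * qpWalks krewerasSteps (3 * n) 0 := by
  obtain ⟨v, hv⟩ := exists_eq_one_add_mul_pow_succ (I := Ideal.span {(X : ℚ⟦X⟧)}) (z := C 4 * X)
    (Ideal.mul_mem_left _ _ (Ideal.mem_span_singleton_self X)) 2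
  have hwalks (k : ℕ) : 2 * (qpWalks krewerasSteps (3 * k) 0 : ℚ) = coeff k (v * (3 - v)) := by
    have hV : expand 3 three_ne_zero v = 1 + 4 * X ^ 3 * expand 3 three_ne_zero v ^ 3 := by
      simpa [expand_C, map_ofNat] using congrArg (expand 3 three_ne_zero) hv
    rw [two_mul_qpWalks_kreweras hV, ← coeff_expand_mul 3 three_ne_zero (v * (3 - v))]
    simp [map_ofNat]
  have hrec := coeff_cubic_recurrence hv n
  rw [← hwalks, ← hwalks] at hrec
  linear_combination hrec / 4

theorem qpWalks_kreweras_eq_ascPochhammer (n : ℕ) :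
    (qpWalks krewerasSteps (3 * (n + 1)) 0 : ℚ) =
      2 * 27 ^ n * (ascPochhammer ℚ n).eval (4 / 3) * (ascPochhammer ℚ n).eval (5 / 3) /
        ((ascPochhammer ℚ n).eval (5 / 2) * (ascPochhammer ℚ n).eval 3) := by
  induction n with
  | zero =>
    have h := qpWalks_kreweras_recurrence 0
    rw [mul_zero, qpWalks_zero, if_pos rfl] at h
    simp only [ascPochhammer_zero, Polynomial.eval_one]
    push_cast at h
    linarith
  | succ n ih =>
    have h := qpWalks_kreweras_recurrence (n + 1)
    rw [ih] at h
    have h₁ : (ascPochhammer ℚ n).eval (5 / 2) ≠ 0 := (ascPochhammer_pos n _ (by norm_num)).ne'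
    have h₂ : (ascPochhammer ℚ n).eval 3 ≠ 0 := (ascPochhammer_pos n _ (by norm_num)).ne'
    have h₃ : (((n + 1 : ℕ) : ℚ) + 2) * (2 * (n + 1 : ℕ) + 3) ≠ 0 := by positivity
    apply mul_left_cancel₀ h₃
    rw [h]
    simp only [ascPochhammer_succ_eval]
    push_cast
    field_simp
    ring

end Kreweras

theorem closed_walks_step_sets_5_and_6 (n : ℕ) (hn : 1 ≤ n) :
    qpWalks {(0,1), (1,0), (-1,-1)} (3 * n) (0, 0) =
      qpWalks {(-1,0), (0,-1), (1,1)} (3 * n) (0, 0) ∧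
    (qpWalks {(0,1), (1,0), (-1,-1)} (3 * n) (0, 0) : ℚ) =
      2 * 27 ^ (n - 1) * (ascPochhammer ℚ (n - 1)).eval (4/3) *
          (ascPochhammer ℚ (n - 1)).eval (5/3) /
        ((ascPochhammer ℚ (n - 1)).eval (5/2) * (ascPochhammer ℚ (n - 1)).eval 3) := by
  have hsteps : ({(-1, 0), (0, -1), (1, 1)} : Set (ℤ × ℤ)) = krewerasSteps := by
    simp [krewerasSteps]
  have hreverse := qpWalks_neg_zero krewerasSteps (3 * n)
  rw [neg_krewerasSteps] at hreverse
  obtain ⟨k, rfl⟩ := Nat.exists_eq_add_of_le' hn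
  rw [hsteps, Prod.mk_zero_zero, hreverse, Nat.add_sub_cancel]
  exact ⟨rfl, qpWalks_kreweras_eq_ascPochhammer k⟩
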